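/- Let n ≥ 1, let Y be a nonempty compact metric space, and let G be a group acting on Y by homeomorphisms such that the action gives Y a topological fractal structure. Suppose Y is a topological n-manifold, i.e., every point of Y has an open neighborhood homeomorphic to an open subset of Euclidean n-space. Then Y is homeomorphic to the n-sphere, i.e., to the unit sphere in Euclidean (n+1)-space. -/

import Mathlib

open Pointwise

open Filter Function Metric Set Topology

/-! Let `p` be the centre of an open cell of `Y`. A compact set `K` avoiding `p` misses a small ball
`W` around `p`; the fractal action moves `Wᶜ` into a given cell, so some cell contains `Wᶜ ⊇ K`.
By compactness of `Y` this cell is not all of `Y`, so it misses a point of `W`, and a homeomorphism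
supported in `W` moves that point to `p`. Hence every compact subset of `{p}ᶜ` lies in an open cell
of `{p}ᶜ`, which makes `{p}ᶜ` a monotone union of open cells. By Brown's theorem `{p}ᶜ` is itself a
Euclidean space, and `Y` is its one-point compactification. -/

section EqOnCompl

variable {X M : Type*}

lemma image_eq_self_of_eqOn_compl {f : X → X} (hf : Bijective f) {s : Set X}
    (hs : EqOn f id sᶜ) : f '' s = s :=
  compl_injective <| by rw [← image_compl_eq hf, hs.image_eq, image_id]

lemma eqOn_viaEmbedding_compl_image {e : Equiv.Perm X} {s : Set X} (he : EqOn e id sᶜ)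
    (ι : X ↪ M) : EqOn (e.viaEmbedding ι) id (ι '' s)ᶜ := fun y hy ↦ by
  by_cases hy' : y ∈ range ι
  · obtain ⟨x, rfl⟩ := hy'
    have hx : x ∈ sᶜ := fun hx ↦ hy (mem_image_of_mem ι hx)
    rw [Equiv.Perm.viaEmbedding_apply, he hx, id, id]
  · exact e.viaEmbedding_apply_of_notMem ι y hy'

variable [TopologicalSpace X] [TopologicalSpace M] [T2Space M]

lemma continuous_viaEmbedding {ι : X ↪ M} (hι : IsOpenEmbedding ι) {e : Equiv.Perm X}
    (he : Continuous e) {s : Set X} (hs : IsCompact (closure s)) (hid : EqOn e id sᶜ) :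
    Continuous (e.viaEmbedding ι) := by
  refine continuous_iff_continuousAt.2 fun y ↦ ?_
  by_cases hy : y ∈ ι '' closure s
  · obtain ⟨x, -, rfl⟩ := hy
    rw [← hι.continuousAt_iff, show e.viaEmbedding ι ∘ ι = ι ∘ e from
      funext (e.viaEmbedding_apply ι)]
    exact (hι.continuous.comp he).continuousAt
  · have hnhds : (ι '' closure s)ᶜ ∈ 𝓝 y :=
      (hs.image hι.continuous).isClosed.isOpen_compl.mem_nhds hy
    have hid' : EqOn e id (closure s)ᶜ := hid.mono (compl_subset_compl.2 subset_closure)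
    exact continuousAt_id.congr
      ((eqOn_viaEmbedding_compl_image hid' ι).eventuallyEq_of_mem hnhds).symm

lemma exists_homeomorph_extending {ψ : X → M} (hψ : IsOpenEmbedding ψ) (h : X ≃ₜ X) {s : Set X}
    (hs : IsCompact (closure s)) (hid : EqOn h id sᶜ) :
    ∃ H : M ≃ₜ M, (∀ x, H (ψ x) = ψ (h x)) ∧ EqOn H id (ψ '' s)ᶜ := by
  let ι : X ↪ M := ⟨ψ, hψ.injective⟩
  let e : Equiv.Perm X := h.toEquiv
  have hid_symm : EqOn (e⁻¹ : Equiv.Perm X) id sᶜ := fun x hx ↦ (h.symm_apply_eq).2 (hid hx).symm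
  have inv_eq : (e.viaEmbedding ι)⁻¹ = e⁻¹.viaEmbedding ι :=
    (map_inv (Equiv.Perm.viaEmbeddingHom ι) e).symm
  have continuous_inv : Continuous ((e.viaEmbedding ι)⁻¹ : Equiv.Perm M) :=
    inv_eq ▸ continuous_viaEmbedding hψ h.symm.continuous hs hid_symm
  exact ⟨⟨e.viaEmbedding ι, continuous_viaEmbedding hψ h.continuous hs hid, continuous_inv⟩,
    e.viaEmbedding_apply ι, eqOn_viaEmbedding_compl_image hid ι⟩

end EqOnCompl

section Radial

lemma exists_orderIso_eqOn_Iic_eqOn_Ici {a b c d : ℝ} (hab : a < b) (hbc : b ≤ c) (hcd : c < d) :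
    ∃ f : ℝ ≃o ℝ, EqOn f id (Iic a) ∧ EqOn f id (Ici d) ∧ f b = c := by
  have hab' : 0 < b - a := sub_pos.2 hab
  have hbd' : 0 < d - b := by linarith
  obtain ⟨m, hm⟩ : ∃ m, m = (c - a) / (b - a) := ⟨_, rfl⟩
  obtain ⟨k, hk⟩ : ∃ k, k = (d - c) / (d - b) := ⟨_, rfl⟩
  have one_le_m : 1 ≤ m := by rw [hm, one_le_div hab']; linarith
  have k_pos : 0 < k := hk ▸ div_pos (by linarith) hbd'
  have k_le_one : k ≤ 1 := by rw [hk, div_le_one hbd']; linarith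
  -- The chords from `(a, a)` to `(b, c)` and from `(b, c)` to `(d, d)`; outside `[a, d]` one of
  -- them lies below the diagonal.
  let f : ℝ → ℝ := fun t ↦ max t (min (a + m * (t - a)) (d - k * (d - t)))
  have strictMono : StrictMono f := fun s t hst ↦
    max_lt_max hst (min_lt_min (by nlinarith) (by nlinarith))
  have eq_of_le : EqOn f id (Iic a) := fun t (ht : t ≤ a) ↦
    max_eq_left (min_le_of_left_le (by nlinarith))
  have eq_of_ge : EqOn f id (Ici d) := fun t (ht : d ≤ t) ↦
    max_eq_left (min_le_of_right_le (by nlinarith))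
  have surjective : Surjective f := Continuous.surjective (by fun_prop)
    (tendsto_atTop_mono (fun t ↦ le_max_left _ _) tendsto_id)
    (tendsto_id.congr' ((eventually_le_atBot a).mono fun t ht ↦ (eq_of_le ht).symm))
  refine ⟨strictMono.orderIsoOfSurjective f surjective, eq_of_le, eq_of_ge, ?_⟩
  have hmb : a + m * (b - a) = c := by rw [hm, div_mul_cancel₀ _ hab'.ne']; ring
  have hkb : d - k * (d - b) = c := by rw [hk, div_mul_cancel₀ _ hbd'.ne']; ring
  change max b (min (a + m * (b - a)) (d - k * (d - b))) = c
  rw [hmb, hkb, min_self, max_eq_right hbc]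

variable {E : Type*} [NormedAddCommGroup E] [NormedSpace ℝ E]

/-- The radial map of a normed space that moves the sphere of radius `t` to the sphere of radius
`f t`, when `f` is nonnegative at `t`. It fixes the origin, where `f ‖x‖ / ‖x‖` is a junk value. -/
noncomputable def radialMap (f : ℝ → ℝ) (x : E) : E :=
  (f ‖x‖ / ‖x‖) • x

lemma norm_radialMap {f : ℝ → ℝ} (hf : f 0 = 0) (x : E) : ‖radialMap f x‖ = |f ‖x‖| := by
  rcases eq_or_ne x 0 with rfl | hx
  · simp [radialMap, hf]
  · rw [radialMap, norm_smul, Real.norm_eq_abs, abs_div, abs_norm,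
      div_mul_cancel₀ _ (norm_ne_zero_iff.2 hx)]

lemma radialMap_eq_self {f : ℝ → ℝ} {x : E} (hf : f ‖x‖ = ‖x‖) : radialMap f x = x := by
  rcases eq_or_ne x 0 with rfl | hx
  · simp [radialMap]
  · rw [radialMap, hf, div_self (norm_ne_zero_iff.2 hx), one_smul]

lemma radialMap_radialMap {f g : ℝ → ℝ} (hf : f 0 = 0) (hg : g 0 = 0) {x : E}
    (hx : 0 ≤ f ‖x‖) : radialMap g (radialMap f x) = radialMap (g ∘ f) x := by
  have hnorm : ‖radialMap f x‖ = f ‖x‖ := by rw [norm_radialMap hf, abs_of_nonneg hx]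
  rw [radialMap, hnorm, radialMap, radialMap, smul_smul, comp_apply]
  rcases eq_or_ne (f ‖x‖) 0 with h0 | h0
  · simp [h0, hg]
  · rw [div_mul_div_cancel₀ h0]

lemma continuous_radialMap {f : ℝ → ℝ} (hf : Continuous f) (hf0 : f 0 = 0) :
    Continuous (radialMap f : E → E) := by
  refine continuous_iff_continuousAt.2 fun x ↦ ?_
  rcases eq_or_ne x 0 with rfl | hx
  · have h0 : radialMap f (0 : E) = 0 := by simp [radialMap]
    have hnorm : Tendsto (fun y : E ↦ |f ‖y‖|) (𝓝 0) (𝓝 0) := by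
      simpa [hf0] using (hf.comp continuous_norm).abs.tendsto (0 : E)
    rw [ContinuousAt, h0]
    exact squeeze_zero_norm (fun y ↦ (norm_radialMap hf0 y).le) hnorm
  · exact ((hf.comp continuous_norm).continuousAt.div continuous_norm.continuousAt
      (norm_ne_zero_iff.2 hx)).smul continuousAt_id

lemma radialMap_symm_radialMap {f : ℝ ≃o ℝ} (hf : f 0 = 0) (x : E) :
    radialMap f.symm (radialMap f x) = x := by
  have hpos : 0 ≤ f ‖x‖ := hf ▸ f.monotone (norm_nonneg x)
  rw [radialMap_radialMap hf ((f.symm_apply_eq).2 hf.symm) hpos]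
  exact radialMap_eq_self (f.symm_apply_apply _)

/-- `radialMap f` as a homeomorphism, for an order automorphism `f` of `ℝ` fixing `0`. -/
noncomputable def radialHomeomorph (f : ℝ ≃o ℝ) (hf : f 0 = 0) : E ≃ₜ E :=
  have hf' : f.symm 0 = 0 := (f.symm_apply_eq).2 hf.symm
  { toFun := radialMap f
    invFun := radialMap f.symm
    left_inv := radialMap_symm_radialMap hf
    right_inv := radialMap_symm_radialMap (f := f.symm) hf'
    continuous_toFun := continuous_radialMap f.continuous hf
    continuous_invFun := continuous_radialMap f.symm.continuous hf' }

lemma exists_homeomorph_closedBall_subset_image_ball {δ r R : ℝ} (hδ : 0 < δ) (hr : 0 < r)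
    (hrR : r < R) : ∃ h : E ≃ₜ E,
      closedBall 0 r ⊆ h '' ball 0 δ ∧ h =ᶠ[𝓝 0] id ∧ EqOn h id (ball 0 R)ᶜ := by
  obtain ⟨b, hb, hbδr⟩ := exists_between (lt_min hδ hr)
  obtain ⟨hbδ, hbr⟩ := lt_min_iff.1 hbδr
  obtain ⟨f, f_near, f_far, hfb⟩ :=
    exists_orderIso_eqOn_Iic_eqOn_Ici (half_lt_self hb) hbr.le hrR
  have hf0 : f 0 = 0 := f_near (half_pos hb).le
  refine ⟨radialHomeomorph f hf0, fun x hx ↦ ?_, ?_, fun x hx ↦ ?_⟩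
  · have hf0' : f.symm 0 = 0 := (f.symm_apply_eq).2 hf0.symm
    refine ⟨(radialHomeomorph f hf0).symm x, ?_, Homeomorph.apply_symm_apply _ x⟩
    have hpos : 0 ≤ f.symm ‖x‖ := hf0' ▸ f.symm.monotone (norm_nonneg x)
    have hle : f.symm ‖x‖ ≤ b := by
      rw [← hfb] at hx
      simpa [f.symm_apply_le] using hx
    change radialMap f.symm x ∈ ball 0 δ
    rw [mem_ball_zero_iff, norm_radialMap hf0', abs_of_nonneg hpos]
    exact hle.trans_lt hbδ
  · filter_upwards [closedBall_mem_nhds 0 (half_pos hb)] with x hx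
    exact radialMap_eq_self (f_near (mem_closedBall_zero_iff.1 hx))
  · exact radialMap_eq_self (f_far (by simpa using hx))

end Radial

section Cells

variable {E M : Type*} [NormedAddCommGroup E] [NormedSpace ℝ E]

lemma exists_homeomorph_forall_eq_add [CompleteSpace E] {u : E → E} {K : NNReal}
    (hu : LipschitzWith K u) (hK : K < 1) : ∃ h : E ≃ₜ E, ∀ x, h x = x + u x := by
  have happrox : ApproximatesLinearOn (fun x ↦ x + u x)
      (ContinuousLinearEquiv.refl ℝ E : E →L[ℝ] E) univ K := fun x _ y _ ↦ by
    have hsub : x + u x - (y + u y) - (x - y) = u x - u y := by abel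
    change ‖x + u x - (y + u y) - (x - y)‖ ≤ K * ‖x - y‖
    exact hsub ▸ hu.norm_sub_le x y
  have hlt : Subsingleton E ∨ K < ‖((ContinuousLinearEquiv.refl ℝ E).symm : E →L[ℝ] E)‖₊⁻¹ := by
    rcases subsingleton_or_nontrivial E with hE | hE
    · exact Or.inl hE
    · exact Or.inr (by simpa using hK)
  exact ⟨happrox.toHomeomorph _ hlt, fun x ↦ rfl⟩

lemma exists_homeomorph_zero_eq [CompleteSpace E] {v : E} {R : ℝ} (hv : ‖v‖ < R) :
    ∃ h : E ≃ₜ E, h 0 = v ∧ EqOn h id (ball 0 R)ᶜ := by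
  have hR : 0 < R := (norm_nonneg v).trans_lt hv
  let bump : E → ℝ := fun x ↦ max 0 (1 - ‖x‖ / R)
  have bump_lipschitz : ∀ x y, |bump x - bump y| ≤ ‖x - y‖ / R := fun x y ↦ calc
    |bump x - bump y| ≤ |(1 - ‖x‖ / R) - (1 - ‖y‖ / R)| := by
      simpa using abs_max_sub_max_le_max 0 (1 - ‖x‖ / R) 0 (1 - ‖y‖ / R)
    _ = |‖y‖ - ‖x‖| / R := by rw [← abs_of_pos hR, ← abs_div, abs_of_pos hR]; ring_nf
    _ ≤ ‖x - y‖ / R := by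
      rw [norm_sub_rev]
      gcongr
      exact abs_norm_sub_norm_le y x
  have hlip : LipschitzWith (‖v‖ / R).toNNReal (fun x ↦ bump x • v) :=
    .of_dist_le' fun x y ↦ by
      rw [dist_eq_norm, dist_eq_norm, ← sub_smul, norm_smul, Real.norm_eq_abs,
        div_mul_eq_mul_div, mul_comm, mul_div_assoc]
      gcongr
      exact bump_lipschitz x y
  obtain ⟨h, hh⟩ := exists_homeomorph_forall_eq_add hlip
    (Real.toNNReal_lt_one.2 ((div_lt_one hR).2 hv))
  refine ⟨h, by simp [hh, bump], fun x hx ↦ ?_⟩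
  have bump_eq : bump x = 0 := max_eq_left (by
    rw [sub_nonpos, one_le_div hR]
    simpa using hx)
  rw [hh, bump_eq, zero_smul, add_zero, id]

variable [TopologicalSpace M]

lemma exists_isOpenEmbedding_zero_eq {U : Set M} (hU : IsOpen U) {V : Set E} (hV : IsOpen V)
    (e : U ≃ₜ V) (y : U) : ∃ ψ : E → M, IsOpenEmbedding ψ ∧ ψ 0 = y := by
  obtain ⟨r, hr, hrV⟩ := Metric.isOpen_iff.1 hV (e y) (e y).2
  let B := OpenPartialHomeomorph.univBall (e y : E) r
  have hB : IsOpenEmbedding B := B.isOpenEmbedding (by simp [B])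
  have B_mem : ∀ x, B x ∈ V := fun x ↦ hrV <| by
    rw [← OpenPartialHomeomorph.univBall_target _ hr]
    exact B.map_source (by simp [B])
  have hcod : IsOpenEmbedding (codRestrict B V B_mem) := .of_comp _ hV.isOpenEmbedding_subtypeVal hB
  refine ⟨fun x ↦ e.symm (codRestrict B V B_mem x),
    hU.isOpenEmbedding_subtypeVal.comp (e.symm.isOpenEmbedding.comp hcod), ?_⟩
  have h0 : codRestrict B V B_mem 0 = e y :=
    Subtype.ext (OpenPartialHomeomorph.univBall_apply_zero _ _)
  simp [h0]

variable [ProperSpace E] [T2Space M]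

lemma exists_homeomorph_image_closedBall_subset_image {ψ : E → M} (hψ : IsOpenEmbedding ψ)
    {r R : ℝ} (hr : 0 < r) (hrR : r < R) {U : Set M} (hU : U ∈ 𝓝 (ψ 0)) :
    ∃ T : M ≃ₜ M, ψ '' closedBall 0 r ⊆ T '' U ∧ T =ᶠ[𝓝 (ψ 0)] id ∧
      EqOn T id (ψ '' ball 0 R)ᶜ := by
  obtain ⟨δ, hδ, hδU⟩ := Metric.mem_nhds_iff.1 (hψ.continuous.continuousAt hU)
  obtain ⟨t, t_expand, t_near, t_far⟩ :=
    exists_homeomorph_closedBall_subset_image_ball (E := E) hδ hr hrR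
  obtain ⟨T, hT, T_far⟩ := exists_homeomorph_extending hψ t isBounded_ball.isCompact_closure t_far
  refine ⟨T, ?_, ?_, T_far⟩
  · rintro _ ⟨x, hx, rfl⟩
    obtain ⟨z, hz, rfl⟩ := t_expand hx
    exact ⟨ψ z, hδU hz, hT z⟩
  · rw [← hψ.map_nhds_eq]
    exact eventually_map.2 (t_near.mono fun x hx ↦ (hT x).trans (congrArg ψ hx))

end Cells

section MonotoneUnion

section Gluing

variable {X M : Type*} {s : ℕ → Set X}

lemma exists_forall_eqOn_of_monotone {φ : ℕ → X → M} (hs : Monotone s) (hcov : ⋃ i, s i = univ)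
    (hφ : ∀ i, EqOn (φ (i + 1)) (φ i) (s i)) : ∃ Φ : X → M, ∀ i, EqOn Φ (φ i) (s i) := by
  have eqOn_of_le : ∀ i j, i ≤ j → EqOn (φ j) (φ i) (s i) := fun i j hij ↦ by
    induction j, hij using Nat.le_induction with
    | base => exact eqOn_refl _ _
    | succ j hij ih => exact ((hφ j).mono (hs hij)).trans ih
  choose idx hidx using iUnion_eq_univ_iff.1 hcov
  refine ⟨fun x ↦ φ (idx x) x, fun i x hx ↦ ?_⟩
  rcases le_total (idx x) i with h | h
  · exact (eqOn_of_le _ _ h (hidx x)).symm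
  · exact eqOn_of_le _ _ h hx

lemma isOpenEmbedding_of_eqOn_of_monotone [TopologicalSpace X] [TopologicalSpace M]
    (hs : Monotone s) (hopen : ∀ i, IsOpen (s i)) (hcov : ⋃ i, s i = univ) {φ : ℕ → X → M}
    (hφ : ∀ i, IsOpenEmbedding (φ i)) {Φ : X → M} (hΦ : ∀ i, EqOn Φ (φ i) (s i)) :
    IsOpenEmbedding Φ := by
  have hmem := iUnion_eq_univ_iff.1 hcov
  have eventuallyEq : ∀ x, ∃ i, Φ =ᶠ[𝓝 x] φ i := fun x ↦
    let ⟨i, hi⟩ := hmem x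
    ⟨i, (hΦ i).eventuallyEq_of_mem ((hopen i).mem_nhds hi)⟩
  refine .of_continuous_injective_isOpenMap (continuous_iff_continuousAt.2 fun x ↦ ?_)
    (fun x y hxy ↦ ?_) (.of_nhds_le fun x ↦ ?_)
  · obtain ⟨i, hi⟩ := eventuallyEq x
    exact (hφ i).continuous.continuousAt.congr hi.symm
  · obtain ⟨i, hi⟩ := hmem x
    obtain ⟨j, hj⟩ := hmem y
    rw [hΦ (max i j) (hs (le_max_left i j) hi), hΦ (max i j) (hs (le_max_right i j) hj)] at hxy
    exact (hφ _).injective hxy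
  · obtain ⟨i, hi⟩ := eventuallyEq x
    rw [Filter.map_congr hi, hi.eq_of_nhds]
    exact (hφ i).isOpenMap.nhds_le x

end Gluing

/-- Every compact subset of `M` lies in an open cell, that is, in the range of an open embedding of
`E`. For σ-compact `M` this says that `M` is a monotone union of open cells, the hypothesis of
Brown's theorem. -/
def CompactsLieInCells (E M : Type*) [TopologicalSpace E] [TopologicalSpace M] : Prop :=
  ∀ K : Set M, IsCompact K → ∃ ψ : E → M, IsOpenEmbedding ψ ∧ K ⊆ range ψ

namespace CompactsLieInCells

variable {E M : Type*} [TopologicalSpace M]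

lemma exists_isOpenEmbedding_zero_eq [AddGroup E] [TopologicalSpace E] [SeparatelyContinuousAdd E]
    (hM : CompactsLieInCells E M) {K : Set M} (hK : IsCompact K) {p : M} (hp : p ∈ K) :
    ∃ ψ : E → M, IsOpenEmbedding ψ ∧ K ⊆ range ψ ∧ ψ 0 = p := by
  obtain ⟨ψ, hψ, hKψ⟩ := hM K hK
  obtain ⟨a, rfl⟩ := hKψ hp
  refine ⟨ψ ∘ Homeomorph.addLeft a, hψ.comp (Homeomorph.isOpenEmbedding _), ?_, by simp⟩
  rwa [(Homeomorph.addLeft a).surjective.range_comp]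

variable [NormedAddCommGroup E] [NormedSpace ℝ E] [ProperSpace E] [T2Space M]

-- With `T` expanding `φ '' ball 0 R` over `K` and `S` expanding the fixed points of `T` near `φ 0`
-- over `φ '' closedBall 0 r`, the conjugate `S ∘ T ∘ S⁻¹` has both properties.
lemma exists_homeomorph_engulfing (hM : CompactsLieInCells E M) {φ : E → M}
    (hφ : IsOpenEmbedding φ) {r R : ℝ} (hr : 0 < r) (hrR : r < R) {K : Set M} (hK : IsCompact K) :
    ∃ H : M ≃ₜ M, EqOn H id (φ '' closedBall 0 r) ∧ K ⊆ H '' (φ '' ball 0 R) := by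
  have hR : 0 < R := hr.trans hrR
  have hcompact : IsCompact (K ∪ φ '' closedBall 0 R) :=
    hK.union ((isCompact_closedBall 0 R).image hφ.continuous)
  obtain ⟨ψ, hψ, hsub, hψ0⟩ := hM.exists_isOpenEmbedding_zero_eq hcompact
    (Or.inr (mem_image_of_mem φ (mem_closedBall_self hR.le)))
  obtain ⟨L, hL, hsubL⟩ :=
    (hψ.isInducing.isCompact_preimage' hcompact hsub).isBounded.subset_closedBall_lt 0 0
  have hball : φ '' ball 0 R ∈ 𝓝 (φ 0) :=
    (hφ.isOpenMap _ isOpen_ball).mem_nhds (mem_image_of_mem φ (mem_ball_self hR))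
  obtain ⟨T, T_expand, T_near, -⟩ :=
    exists_homeomorph_image_closedBall_subset_image hψ hL (lt_add_one L) (hψ0 ▸ hball)
  obtain ⟨S, S_expand, -, S_far⟩ :=
    exists_homeomorph_image_closedBall_subset_image hφ hr hrR (hψ0 ▸ T_near)
  have S_ball : S '' (φ '' ball 0 R) = φ '' ball 0 R :=
    image_eq_self_of_eqOn_compl S.bijective S_far
  refine ⟨S.symm.trans (T.trans S), fun y hy ↦ ?_, fun k hk ↦ ?_⟩
  · obtain ⟨z, hz : T z = z, rfl⟩ := S_expand hy
    simp [hz]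
  · have hSk : S.symm k ∈ K ∪ φ '' closedBall 0 R := by
      by_cases hkR : k ∈ φ '' ball 0 R
      · obtain ⟨z, hz, rfl⟩ := S_ball.symm ▸ hkR
        rw [S.symm_apply_apply]
        exact Or.inr (image_mono ball_subset_closedBall hz)
      · have hfix : S.symm k = k := (S.symm_apply_eq).2 (S_far hkR).symm
        rw [hfix]
        exact Or.inl hk
    obtain ⟨w, hw⟩ := hsub hSk
    obtain ⟨u, hu, hTu⟩ := T_expand ⟨w, hsubL (hw ▸ hSk : ψ w ∈ _), hw⟩
    exact ⟨S u, S_ball ▸ mem_image_of_mem S hu, by simp [hTu]⟩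

-- Brown, The monotone union of open n-cells is an open n-cell (1961).
theorem nonempty_homeomorph [SigmaCompactSpace M] (hM : CompactsLieInCells E M) :
    Nonempty (E ≃ₜ M) := by
  let s : ℕ → Set E := fun i ↦ ball 0 (i + 1)
  have hs : Monotone s := fun i j hij ↦ ball_subset_ball (by gcongr)
  have hcov : ⋃ i, s i = univ := iUnion_eq_univ_iff.2 fun x ↦
    ⟨⌊‖x‖⌋₊, mem_ball_zero_iff.2 (Nat.lt_floor_add_one ‖x‖)⟩
  have exists_next : ∀ (i : ℕ) (φ : {φ : E → M // IsOpenEmbedding φ}),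
      ∃ φ' : {φ : E → M // IsOpenEmbedding φ},
        EqOn φ'.1 φ.1 (s i) ∧ compactCovering M i ⊆ φ'.1 '' s (i + 1) := fun i φ ↦ by
    obtain ⟨H, H_fix, H_engulf⟩ := hM.exists_homeomorph_engulfing φ.2
      (r := i + 1) (R := (i + 1 : ℕ) + 1) (by positivity) (by simp) (isCompact_compactCovering M i)
    exact ⟨⟨H ∘ φ.1, H.isOpenEmbedding.comp φ.2⟩,
      fun x hx ↦ H_fix (mem_image_of_mem _ (ball_subset_closedBall hx)),
      by rwa [image_comp]⟩
  choose next next_eq next_covers using exists_next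
  obtain ⟨φ₀, hφ₀, -⟩ := hM ∅ isCompact_empty
  let φ : ℕ → {φ : E → M // IsOpenEmbedding φ} := fun i ↦ Nat.rec ⟨φ₀, hφ₀⟩ next i
  obtain ⟨Φ, hΦ⟩ := exists_forall_eqOn_of_monotone (φ := fun i ↦ (φ i).1) hs hcov
    fun i ↦ next_eq i (φ i)
  have hΦ_emb : IsOpenEmbedding Φ :=
    isOpenEmbedding_of_eqOn_of_monotone hs (fun _ ↦ isOpen_ball) hcov (fun i ↦ (φ i).2) hΦ
  have hΦ_surj : Surjective Φ := fun y ↦ by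
    obtain ⟨i, hi⟩ := iUnion_eq_univ_iff.1 (iUnion_compactCovering M) y
    obtain ⟨x, hx, rfl⟩ := next_covers i (φ i) hi
    exact ⟨x, hΦ (i + 1) hx⟩
  exact ⟨hΦ_emb.toIsEmbedding.toHomeomorphOfSurjective hΦ_surj⟩

end CompactsLieInCells

end MonotoneUnion

section Fractal

/-- The action of `G` gives `Y` a topological fractal structure: every proper closed subset of `Y`
can be moved into every nonempty open subset. -/
def IsTopologicalFractal (G Y : Type*) [SMul G Y] [TopologicalSpace Y] : Prop :=
  ∀ F : Set Y, IsClosed F → F ≠ univ → ∀ U : Set Y, IsOpen U → U.Nonempty → ∃ g : G, g • F ⊆ U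

lemma range_ne_univ_of_isInducing {X Y : Type*} [TopologicalSpace X] [NoncompactSpace X]
    [TopologicalSpace Y] [CompactSpace Y] {f : X → Y} (hf : IsInducing f) : range f ≠ univ :=
  fun h ↦ noncompact_univ X <| hf.isCompact_iff.2 <| by
    rw [image_univ, h]
    exact isCompact_univ

lemma isSigmaCompact_compl_singleton {Y : Type*} [TopologicalSpace Y] [CompactSpace Y] [T1Space Y]
    (p : Y) [(𝓝 p).IsCountablyGenerated] : IsSigmaCompact ({p}ᶜ : Set Y) := by
  obtain ⟨V, hV, hbasis⟩ := (nhds_basis_opens p).exists_antitone_subbasis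
  have hcompl : ⋃ i, (V i)ᶜ = {p}ᶜ := by
    rw [← compl_iInter, compl_inj_iff]
    simpa using biInter_basis_nhds hbasis.toHasBasis
  rw [← hcompl]
  exact isSigmaCompact_iUnion_of_isCompact _ fun i ↦ (hV i).2.isClosed_compl.isCompact

namespace IsTopologicalFractal

variable {G Y : Type*} [Group G] [TopologicalSpace Y] [MulAction G Y] [ContinuousConstSMul G Y]

lemma exists_isOpenEmbedding_compl_subset_range {X : Type*} [TopologicalSpace X] [Nonempty X]
    (hG : IsTopologicalFractal G Y) {ψ : X → Y} (hψ : IsOpenEmbedding ψ) {W : Set Y}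
    (hW : IsOpen W) (hne : W.Nonempty) : ∃ φ : X → Y, IsOpenEmbedding φ ∧ Wᶜ ⊆ range φ := by
  obtain ⟨g, hg⟩ := hG Wᶜ hW.isClosed_compl (compl_ne_univ.2 hne) (range ψ) hψ.isOpen_range
    (range_nonempty ψ)
  refine ⟨fun x ↦ g⁻¹ • ψ x, (Homeomorph.smul g⁻¹).isOpenEmbedding.comp hψ, fun y hy ↦ ?_⟩
  obtain ⟨x, hx⟩ := hg (smul_mem_smul_set hy)
  exact ⟨x, inv_smul_eq_iff.2 hx⟩

variable {E : Type*} [NormedAddCommGroup E] [NormedSpace ℝ E] [ProperSpace E] [Nontrivial E]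
  [CompactSpace Y] [T2Space Y]

lemma compactsLieInCells_compl_singleton (hG : IsTopologicalFractal G Y) {ψ : E → Y}
    (hψ : IsOpenEmbedding ψ) : CompactsLieInCells E ({ψ 0}ᶜ : Set Y) := by
  intro K hK
  have hK_closed : IsClosed (Subtype.val '' K : Set Y) :=
    (hK.image continuous_subtype_val).isClosed
  have hψK : ψ 0 ∉ Subtype.val '' K := by
    rintro ⟨k, -, hk⟩
    exact k.2 hk
  obtain ⟨R, hR, hRK⟩ := Metric.mem_nhds_iff.1
    (hψ.continuous.continuousAt (hK_closed.isOpen_compl.mem_nhds hψK))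
  obtain ⟨φ, hφ, hWφ⟩ := hG.exists_isOpenEmbedding_compl_subset_range hψ
    (hψ.isOpenMap _ isOpen_ball) ((nonempty_ball.2 hR).image ψ)
  have : NoncompactSpace E := NormedSpace.noncompactSpace ℝ E
  obtain ⟨q, hq⟩ := (ne_univ_iff_exists_notMem _).1 (range_ne_univ_of_isInducing hφ.isInducing)
  obtain ⟨v, hv, rfl⟩ : q ∈ ψ '' ball 0 R := not_not.1 fun h ↦ hq (hWφ h)
  obtain ⟨h, h_zero, h_far⟩ := exists_homeomorph_zero_eq (mem_ball_zero_iff.1 hv)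
  obtain ⟨H, hH, H_far⟩ := exists_homeomorph_extending hψ h isBounded_ball.isCompact_closure h_far
  have avoids : ∀ x, H.symm (φ x) ∈ ({ψ 0}ᶜ : Set Y) := fun x hx ↦ hq ⟨x, by
    rw [← h_zero, ← hH]
    exact (H.symm_apply_eq).1 hx⟩
  refine ⟨codRestrict (H.symm ∘ φ) _ avoids, .of_comp _
    isOpen_compl_singleton.isOpenEmbedding_subtypeVal (H.symm.isOpenEmbedding.comp hφ),
    fun k hk ↦ ?_⟩
  have hkW : (k : Y) ∈ (ψ '' ball 0 R)ᶜ := by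
    rintro ⟨x, hx, hxk⟩
    exact hRK hx ⟨k, hk, hxk.symm⟩
  obtain ⟨x, hx⟩ := hWφ hkW
  refine ⟨x, Subtype.ext ?_⟩
  change H.symm (φ x) = k
  rw [H.symm_apply_eq, hx, H_far hkW, id]

theorem nonempty_homeomorph_onePoint (hG : IsTopologicalFractal G Y) {ψ : E → Y}
    (hψ : IsOpenEmbedding ψ) : Nonempty (Y ≃ₜ OnePoint E) := by
  have : (𝓝 (ψ 0)).IsCountablyGenerated := hψ.map_nhds_eq 0 ▸ inferInstance
  have : SigmaCompactSpace ({ψ 0}ᶜ : Set Y) :=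
    isSigmaCompact_iff_sigmaCompactSpace.1 (isSigmaCompact_compl_singleton (ψ 0))
  obtain ⟨Φ⟩ := (hG.compactsLieInCells_compl_singleton hψ).nonempty_homeomorph
  have hrange : range (Subtype.val ∘ Φ) = {ψ 0}ᶜ := by
    rw [Φ.surjective.range_comp, Subtype.range_val]
  exact ⟨(OnePoint.equivOfIsEmbeddingOfRangeEq (ψ 0) _
    (IsEmbedding.subtypeVal.comp Φ.isEmbedding) hrange).symm⟩

end IsTopologicalFractal

end Fractal

theorem sphere_of_fractal_manifold_general {G Y : Type*} [Group G] [TopologicalSpace Y] [T2Space Y]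
    [CompactSpace Y] [MulAction G Y] [ContinuousConstSMul G Y] (hG : IsTopologicalFractal G Y)
    {n : ℕ} (hn : 1 ≤ n) {U : Set Y} (hU : IsOpen U) (hU_ne : U.Nonempty)
    {V : Set (EuclideanSpace ℝ (Fin n))} (hV : IsOpen V) (e : U ≃ₜ V) :
    Nonempty (Y ≃ₜ sphere (0 : EuclideanSpace ℝ (Fin (n + 1))) 1) := by
  have : Nonempty (Fin n) := ⟨⟨0, hn⟩⟩
  obtain ⟨y, hy⟩ := hU_ne
  obtain ⟨ψ, hψ, -⟩ := exists_isOpenEmbedding_zero_eq hU hV e ⟨y, hy⟩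
  obtain ⟨Φ⟩ := hG.nonempty_homeomorph_onePoint hψ
  exact ⟨Φ.trans (onePointEquivSphereOfFinrankEq (by simp))⟩

/-- Let `n ≥ 1`, let `Y` be a nonempty compact metric space, and let a group `G`
act on `Y` by homeomorphisms with a topological fractal structure. If `Y` is a topological
`n`-manifold (every point has an open neighborhood homeomorphic to an open subset of Euclidean
`n`-space), then `Y` is homeomorphic to the `n`-sphere. -/
theorem sphere_of_fractal_manifold {G Y : Type*} [Group G] [MetricSpace Y] [CompactSpace Y]
    [Nonempty Y] [MulAction G Y] (n : ℕ) (hn : 1 ≤ n)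
    (hcont : ∀ g : G, Continuous fun y : Y => g • y)
    (hfractal : ∀ F : Set Y, IsClosed F → F ≠ Set.univ →
      ∀ U : Set Y, IsOpen U → U.Nonempty → ∃ g : G, g • F ⊆ U)
    (hmanifold : ∀ y : Y, ∃ U : Set Y, IsOpen U ∧ y ∈ U ∧
      ∃ V : Set (EuclideanSpace ℝ (Fin n)), IsOpen V ∧ Nonempty (U ≃ₜ V)) :
    Nonempty (Y ≃ₜ (Metric.sphere (0 : EuclideanSpace ℝ (Fin (n + 1))) 1)) := by
  obtain ⟨U, hU, hy, V, hV, ⟨e⟩⟩ := hmanifold (Classical.arbitrary Y)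
  have : ContinuousConstSMul G Y := ⟨hcont⟩
  exact sphere_of_fractal_manifold_general hfractal hn hU ⟨_, hy⟩ hV e
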